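/- There exists n₁ ∈ ℕ such that for every n ≥ n₁ there exist permutations π₁, …, π_n of {1,…,n} such that every feasible schedule (load at most 1) for the routing instance I(π₁,…,π_n) — which has congestion C = n and dilation D = 2n+3 — has makespan strictly greater than (1 + 10⁻⁵)·(C + D). -/

import Mathlib

/-!
The permutations are found by counting. Let `T = 3n + 2 + s` be the largest makespan to be excluded,
so that `s` is about `3 · 10⁻⁵ n`.

Few schedules. All packets cross the edge `(s,s')` at distinct times and the edge `(u_{n+1},t)` at
distinct times. Hence in a schedule of makespan at most `T` the waiting times between critical edges
add up to at most `n s` over all packets (`exists_profile`). The times at which the packets cross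
critical edges are determined by the first such time of each packet and by these waiting times, so
there are only about `T ^ n · exp (0.0005 n²)` possibilities, called profiles here
(`card_sum_le`, `card_profiles_le`).

Each profile fits few tuples of permutations. For a fixed profile, reveal the permutations one packet
after the other. If at least `m` lower-numbered packets cross critical edges at the time at which
packet `i` crosses its `p`-th one, then these `m` edges are distinct and are forbidden for packet `i`
at position `p`. There are `n²` pairs `(i, p)` and only about `3n` times, so a positive proportion of
the packets meets at least `q = ⌊n/10⌋` such positions with `m = 2q` (`many_crowded_rows`). Each of
these packets has at most `(n - 2q)^q (n - q)! ≤ (9/10)^q n!` possible permutations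
(`extension_card_le`, `row_gain`). Altogether at most `(n!)^n (9/10)^(2q²)` of the `(n!)^n` tuples
are compatible with a given profile (`card_feasiblePerms_le`).

As `(9/10)^(2q²)` is about `exp (-0.002 n²)`, the number of profiles times this proportion is less
than `1` for large `n` (`numeric_bound`), and some tuple of permutations is compatible with no
profile (`exists_perms_not_feasible`).
-/

/-- A routing instance: a finite directed multigraph together with packets
`0,…,k-1`, where packet `i` is given a list of edges `path i`. -/
structure RInst where
  V : Type
  E : Type
  [fintE : Fintype E]
  src : E → V
  dst : E → V
  k : ℕ
  path : Fin k → List E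

attribute [instance] RInst.fintE

namespace RInst

/-- The paths are directed paths (consecutive edges fit head-to-tail) and
use no edge more than once. -/
def Valid (I : RInst) : Prop :=
  (∀ i, List.Chain' (fun e f => I.dst e = I.src f) (I.path i)) ∧
  (∀ i, (I.path i).Nodup)

/-- `σ i t` is the number of edges of `path i` traversed by time `t`. -/
def IsSchedule (I : RInst) (σ : Fin I.k → ℕ → ℕ) : Prop :=
  (∀ i, σ i 0 = 0) ∧
  (∀ i t, σ i (t + 1) = σ i t ∨ σ i (t + 1) = σ i t + 1) ∧
  (∀ i t, σ i t ≤ (I.path i).length)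

/-- Packet `i` crosses edge `e` in time step `t+1`. -/
def Crosses (I : RInst) (σ : Fin I.k → ℕ → ℕ) (i : Fin I.k) (e : I.E) (t : ℕ) : Prop :=
  σ i (t + 1) = σ i t + 1 ∧ (I.path i)[σ i t]? = some e

/-- The load of the schedule is at most `c`: in every time step every edge
is crossed by at most `c` packets. -/
def LoadLE (I : RInst) (σ : Fin I.k → ℕ → ℕ) (c : ℕ) : Prop :=
  ∀ (e : I.E) (t : ℕ), Nat.card {i : Fin I.k | I.Crosses σ i e t} ≤ c

/-- All packets have arrived by time `T` (i.e. the makespan is at most `T`). -/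
def CompletedBy (I : RInst) (σ : Fin I.k → ℕ → ℕ) (T : ℕ) : Prop :=
  ∀ i, σ i T = (I.path i).length

/-- The congestion: the maximum number of paths using a common edge. -/
noncomputable def congestion (I : RInst) : ℕ :=
  Finset.univ.sup fun e : I.E => Nat.card {i : Fin I.k | e ∈ I.path i}

/-- The dilation: the maximum length of a path. -/
noncomputable def dilation (I : RInst) : ℕ :=
  Finset.univ.sup fun i : Fin I.k => (I.path i).length

end RInst

/-! ### The lower-bound instance `I(π₁,…,π_n)` on the graph `G_n` -/

/-- Vertices of `G_n`: `s`, `s'`, `u_1,…,u_{n+1}`, `v_1,…,v_n`, `t`.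
(`Fin (n+1)` indexes `u_1,…,u_{n+1}`, `Fin n` indexes `v_1,…,v_n`.) -/
def Vtx (n : ℕ) : Type := Unit ⊕ Unit ⊕ Fin (n + 1) ⊕ Fin n ⊕ Unit

def Vtx.s {n : ℕ} : Vtx n := Sum.inl ()
def Vtx.s' {n : ℕ} : Vtx n := Sum.inr (Sum.inl ())
def Vtx.u {n : ℕ} (j : Fin (n + 1)) : Vtx n := Sum.inr (Sum.inr (Sum.inl j))
def Vtx.v {n : ℕ} (j : Fin n) : Vtx n := Sum.inr (Sum.inr (Sum.inr (Sum.inl j)))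
def Vtx.t {n : ℕ} : Vtx n := Sum.inr (Sum.inr (Sum.inr (Sum.inr ())))

/-- Edges of `G_n`: `(s,s')`, the edges `(s',u_j)` for `1 ≤ j ≤ n`, the critical
edges `e_j = (u_j,v_j)` for `1 ≤ j ≤ n`, the back edges `(v_j,u_{j'})` for
`j' ≠ j`, and `(u_{n+1},t)`. -/
def Edg (n : ℕ) : Type :=
  Unit ⊕ Fin n ⊕ Fin n ⊕ { p : Fin n × Fin (n + 1) // (p.1 : ℕ) ≠ (p.2 : ℕ) } ⊕ Unit

instance (n : ℕ) : Fintype (Edg n) := by unfold Edg; infer_instance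
instance (n : ℕ) : DecidableEq (Edg n) := by unfold Edg; infer_instance

def Edg.start {n : ℕ} : Edg n := Sum.inl ()
def Edg.toU {n : ℕ} (j : Fin n) : Edg n := Sum.inr (Sum.inl j)
def Edg.crit {n : ℕ} (j : Fin n) : Edg n := Sum.inr (Sum.inr (Sum.inl j))
def Edg.back {n : ℕ} (j : Fin n) (j' : Fin (n + 1)) (h : (j : ℕ) ≠ (j' : ℕ)) : Edg n :=
  Sum.inr (Sum.inr (Sum.inr (Sum.inl ⟨(j, j'), h⟩)))
def Edg.toT {n : ℕ} : Edg n := Sum.inr (Sum.inr (Sum.inr (Sum.inr ())))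

def Edg.src {n : ℕ} : Edg n → Vtx n
  | Sum.inl _ => Vtx.s
  | Sum.inr (Sum.inl _) => Vtx.s'
  | Sum.inr (Sum.inr (Sum.inl j)) => Vtx.u j.castSucc
  | Sum.inr (Sum.inr (Sum.inr (Sum.inl p))) => Vtx.v p.1.1
  | Sum.inr (Sum.inr (Sum.inr (Sum.inr _))) => Vtx.u (Fin.last n)

def Edg.dst {n : ℕ} : Edg n → Vtx n
  | Sum.inl _ => Vtx.s'
  | Sum.inr (Sum.inl j) => Vtx.u j.castSucc
  | Sum.inr (Sum.inr (Sum.inl j)) => Vtx.v j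
  | Sum.inr (Sum.inr (Sum.inr (Sum.inl p))) => Vtx.u p.1.2
  | Sum.inr (Sum.inr (Sum.inr (Sum.inr _))) => Vtx.t

/-- The `u`-vertex visited after crossing the `(i+1)`-st critical edge on the
path of `π`: it is `u_{π(i+2)}` (0-based: `(π (i+1)).castSucc`), except after the
last critical edge, where it is `u_{n+1}` (0-based: `Fin.last n`). -/
def nxt {n : ℕ} (π : Equiv.Perm (Fin n)) (i : Fin n) : Fin (n + 1) :=
  if h : (i : ℕ) + 1 < n then (π ⟨(i : ℕ) + 1, h⟩).castSucc else Fin.last n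

theorem nxt_ne {n : ℕ} (π : Equiv.Perm (Fin n)) (i : Fin n) :
    ((π i : ℕ)) ≠ ((nxt π i : ℕ)) := by
  by_cases h : (i : ℕ) + 1 < n
  · simp only [nxt, dif_pos h, Fin.coe_castSucc]
    intro he
    have h2 : π i = π ⟨(i : ℕ) + 1, h⟩ := Fin.val_injective he
    have h4 : (i : ℕ) = (i : ℕ) + 1 := congrArg Fin.val (π.injective h2)
    omega
  · simp only [nxt, dif_neg h, Fin.val_last]
    exact Nat.ne_of_lt (π i).isLt

/-- The path `P(π) = s, s', u_{π(1)}, v_{π(1)}, u_{π(2)}, v_{π(2)}, …, u_{π(n)},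
v_{π(n)}, u_{n+1}, t` as a list of `2n+3` edges (for `n ≥ 1`). -/
def pathOf {n : ℕ} (π : Equiv.Perm (Fin n)) : List (Edg n) :=
  if h : 0 < n then
    Edg.start :: Edg.toU (π ⟨0, h⟩) ::
      ((List.ofFn fun i : Fin n =>
          [Edg.crit (π i), Edg.back (π i) (nxt π i) (nxt_ne π i)]).flatten ++ [Edg.toT])
  else []

/-- The routing instance `I(π₁,…,π_n)`: the `n` packets with paths
`P(π₁),…,P(π_n)` through `G_n`. -/
def lowerBoundInstance (n : ℕ) (πs : Fin n → Equiv.Perm (Fin n)) : RInst where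
  V := Vtx n
  E := Edg n
  src := Edg.src
  dst := Edg.dst
  k := n
  path i := pathOf (πs i)

/-! ### Counting lemmas -/

open Finset in
/-- Sequential counting: if the values of the members of `F` at `0, 1, …` are revealed in turn and
there are at most `b i` possibilities at coordinate `i`, whatever was revealed before, then
`F` has at most `∏ i, b i` members. -/
theorem card_le_prod_of_extensions {α : Type*} [DecidableEq α] :
    ∀ (n : ℕ) (F : Finset (Fin n → α)) (b : Fin n → ℕ),
      (∀ i, ∀ f ∈ F, ((F.filter fun g => ∀ j < i, g j = f j).image fun g => g i).card ≤ b i) →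
      F.card ≤ ∏ i, b i := by
  intro n
  induction n with
  | zero =>
    intro F b _
    simpa using Finset.card_le_one_of_subsingleton F
  | succ n ih =>
    intro F b h
    have h1 : F.card ≤ b (Fin.last n) * (F.image Fin.init).card := by
      refine Finset.card_le_mul_card_image F _ ?_
      intro a ha
      obtain ⟨f, hf, rfl⟩ := Finset.mem_image.1 ha
      refine le_trans ?_ (h (Fin.last n) f hf)
      refine Finset.card_le_card_of_injOn (fun g => g (Fin.last n)) ?_ ?_
      · intro g hg
        simp only [coe_filter, Set.mem_ofPred_eq] at hg
        simp only [coe_image, coe_filter]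
        refine ⟨g, ⟨hg.1, fun j hj => ?_⟩, rfl⟩
        have := congrFun hg.2 (j.castLT hj)
        simpa [Fin.init] using this
      · intro g hg g' hg' he
        simp only [coe_filter, Set.mem_ofPred_eq] at hg hg'
        rw [← Fin.snoc_init_self g, ← Fin.snoc_init_self g', hg.2, hg'.2]
        simp only at he
        rw [he]
    have h2 : (F.image Fin.init).card ≤ ∏ i : Fin n, b i.castSucc := by
      apply ih
      intro i f' hf'
      obtain ⟨f, hf, rfl⟩ := Finset.mem_image.1 hf'
      refine le_trans (Finset.card_le_card ?_) (h i.castSucc f hf)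
      intro x hx
      simp only [mem_image, mem_filter] at hx ⊢
      obtain ⟨_, ⟨⟨g, hg, rfl⟩, hgj⟩, rfl⟩ := hx
      refine ⟨g, ⟨hg, fun j hj => ?_⟩, rfl⟩
      have hj' : (j : ℕ) < n := lt_trans hj i.2
      exact hgj (j.castLT hj') hj
    rw [Fin.prod_univ_castSucc, mul_comm]
    exact h1.trans (Nat.mul_le_mul_left _ h2)

open Finset in
/-- Permutations with at most `y` allowed values at each point of `B`: at most `y` choices at each
point of `B`, then `(n - |B|)!` ways to complete the permutation. -/
theorem card_perm_constrained_le {n : ℕ} (B : Finset (Fin n)) (Y : Fin n → Finset (Fin n)) (y : ℕ)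
    (hY : ∀ p ∈ B, (Y p).card ≤ y) :
    (univ.filter fun π : Equiv.Perm (Fin n) => ∀ p ∈ B, π p ∈ Y p).card ≤
      y ^ B.card * (n - B.card).factorial := by
  classical
  have key := Finset.card_le_mul_card_image (f := fun (π : Equiv.Perm (Fin n)) (p : B) => π p)
    (univ.filter fun π : Equiv.Perm (Fin n) => ∀ p ∈ B, π p ∈ Y p) (n - B.card).factorial ?_
  · refine key.trans ?_
    rw [mul_comm]
    refine Nat.mul_le_mul_right _ ?_
    calc _ ≤ (Fintype.piFinset fun p : B => Y p).card := by
          refine card_le_card fun g hg => ?_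
          obtain ⟨π, hπ, rfl⟩ := mem_image.1 hg
          simp only [mem_filter] at hπ
          exact Fintype.mem_piFinset.2 fun p => hπ.2 p p.2
      _ = ∏ p : B, (Y p).card := Fintype.card_piFinset _
      _ ≤ ∏ _p : B, y := prod_le_prod' fun p _ => hY p p.2
      _ = y ^ B.card := by simp
  · intro g hg
    obtain ⟨π₀, -, rfl⟩ := mem_image.1 hg
    have hc : Fintype.card {f : Equiv.Perm (Fin n) // ∀ a, ¬ (a ∉ B) → f a = a} =
        (n - B.card).factorial := by
      rw [← Fintype.card_congr (Equiv.Perm.subtypeEquivSubtypePerm fun a => a ∉ B),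
        Fintype.card_perm]
      congr 1
      rw [Fintype.card_subtype_compl]
      simp
    rw [← hc, Fintype.card_subtype]
    refine card_le_card_of_injOn (fun π => π₀⁻¹ * π) ?_ ?_
    · intro π hπ
      simp only [coe_filter, mem_filter, Set.mem_ofPred_eq] at hπ
      simp only [coe_filter, Set.mem_ofPred_eq, mem_univ, true_and, not_not]
      intro a ha
      have := congrFun hπ.2 ⟨a, ha⟩
      simp only at this
      simp [this]
    · intro π _ π' _ h
      exact mul_left_cancel h

/-! ### Tuples of permutations compatible with given crossing times -/

/-- The tuples of permutations compatible with prescribed crossing times: `τ i p` is the time at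
which packet `i` crosses its `p`-th critical edge, and no two packets may cross the same critical
edge at the same time. -/
noncomputable def feasiblePerms {n : ℕ} (τ : Fin n → Fin n → ℕ) :
    Finset (Fin n → Equiv.Perm (Fin n)) := by
  classical
  exact Finset.univ.filter fun π => ∀ i j p q, τ i p = τ j q → π i p = π j q → i = j

/-- The packets `j < i` that cross some critical edge at the time `τ i p`. The word `earlier`
refers to the numbering of the packets, not to time. -/
noncomputable def earlier {n : ℕ} (τ : Fin n → Fin n → ℕ) (i p : Fin n) : Finset (Fin n) := by
  classical
  exact Finset.univ.filter fun j => j < i ∧ ∃ q, τ j q = τ i p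

/-- The positions `p` at which packet `i` competes with at least `m` lower-numbered packets. -/
noncomputable def crowded {n : ℕ} (τ : Fin n → Fin n → ℕ) (m : ℕ) (i : Fin n) :
    Finset (Fin n) :=
  Finset.univ.filter fun p => m ≤ (earlier τ i p).card

open Finset in
/-- The main saving. Let the permutations of the packets `j < i` be fixed. At a crowded position the
lower-numbered packets moving at that time occupy at least `m` *distinct* critical edges, so packet
`i` has at most `n - m` edges left there. Using this at `k` crowded positions bounds the number of
choices for the permutation of packet `i`. -/
theorem extension_card_le {n : ℕ} (τ : Fin n → Fin n → ℕ) (m k : ℕ) (i : Fin n)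
    (hk : k ≤ (crowded τ m i).card) (f : Fin n → Equiv.Perm (Fin n)) (hf : f ∈ feasiblePerms τ) :
    (((feasiblePerms τ).filter fun g => ∀ j < i, g j = f j).image fun g => g i).card ≤
      (n - m) ^ k * (n - k).factorial := by
  classical
  obtain ⟨B, hB, hBk⟩ := exists_subset_card_eq hk
  have hf' : ∀ i j p q, τ i p = τ j q → f i p = f j q → i = j := by
    simpa [feasiblePerms] using hf
  have hex : ∀ p j, ∃ e, j ∈ earlier τ i p → ∃ q, τ j q = τ i p ∧ f j q = e := by
    intro p j
    by_cases h : j ∈ earlier τ i p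
    · obtain ⟨-, -, q, hq⟩ := by simpa only [earlier, mem_filter] using h
      exact ⟨f j q, fun _ => ⟨q, hq, rfl⟩⟩
    · exact ⟨i, fun h' => absurd h' h⟩
  choose e he using hex
  rw [← hBk]
  refine le_trans (card_le_card ?_)
    (card_perm_constrained_le B (fun p => univ \ (earlier τ i p).image (e p)) (n - m) ?_)
  · intro x hx
    simp only [mem_image, mem_filter] at hx
    obtain ⟨g, ⟨hg, hgf⟩, rfl⟩ := hx
    have hg' : ∀ i j p q, τ i p = τ j q → g i p = g j q → i = j := by
      simpa [feasiblePerms] using hg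
    simp only [mem_filter, mem_univ, true_and, mem_sdiff, mem_image, not_exists, not_and]
    intro p _ j hj hej
    obtain ⟨q, hq, hfq⟩ := he p j hj
    have hji : j < i := by
      simp only [earlier, mem_filter] at hj
      exact hj.2.1
    refine hji.ne (hg' j i q p hq ?_)
    rw [hgf j hji, hfq, hej]
  · intro p hp
    have hm : m ≤ (earlier τ i p).card := by
      have := hB hp
      simpa [crowded] using this
    have hinj : ((earlier τ i p).image (e p)).card = (earlier τ i p).card := by
      refine card_image_of_injOn fun j hj j' hj' h => ?_
      obtain ⟨q, hq, hfq⟩ := he p j hj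
      obtain ⟨q', hq', hfq'⟩ := he p j' hj'
      exact hf' j j' q q' (hq.trans hq'.symm) (by rw [hfq, hfq', h])
    rw [card_sdiff_of_subset (subset_univ _), hinj, card_univ, Fintype.card_fin]
    omega

open Finset in
/-- For each time `t` at most `m` packets cross at time `t` while competing with fewer than `m`
lower-numbered packets, since the number of competitors determines the packet. -/
theorem card_not_crowded_le {n : ℕ} (τ : Fin n → Fin n → ℕ) (hτ : ∀ i, Function.Injective (τ i))
    (T m : ℕ) (hT : ∀ i p, τ i p < T) :
    (univ.filter fun x : Fin n × Fin n => ¬ m ≤ (earlier τ x.1 x.2).card).card ≤ T * m := by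
  classical
  have : (range T ×ˢ range m).card = T * m := by simp
  rw [← this]
  refine card_le_card_of_injOn (fun x => (τ x.1 x.2, (earlier τ x.1 x.2).card)) ?_ ?_
  · intro x hx
    simp only [coe_filter, Set.mem_ofPred_eq, mem_univ, true_and, not_le] at hx
    simp only [coe_product, Set.mem_prod, coe_range, Set.mem_Iio]
    exact ⟨hT _ _, hx⟩
  · have aux : ∀ i p i' p', i < i' → τ i p = τ i' p' →
        (earlier τ i p).card < (earlier τ i' p').card := by
      intro i p i' p' hii h
      refine card_lt_card ((ssubset_iff_of_subset ?_).2 ⟨i, ?_, ?_⟩)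
      · intro j hj
        simp only [earlier, mem_filter, mem_univ, true_and] at hj ⊢
        obtain ⟨h1, q, hq⟩ := hj
        exact ⟨h1.trans hii, q, hq.trans h⟩
      · simp only [earlier, mem_filter, mem_univ, true_and]
        exact ⟨hii, p, h⟩
      · simp [earlier]
    rintro ⟨i, p⟩ - ⟨i', p'⟩ - h
    simp only [Prod.mk.injEq] at h
    rcases lt_trichotomy i i' with hlt | rfl | hlt
    · exact absurd h.2 (aux _ _ _ _ hlt h.1).ne
    · rw [hτ i h.1]
    · exact absurd h.2 (aux _ _ _ _ hlt h.1.symm).ne'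

open Finset in
/-- Double counting of the pairs `(i, p)`: many packets have at least `k` crowded positions. -/
theorem many_crowded_rows {n : ℕ} (τ : Fin n → Fin n → ℕ) (hτ : ∀ i, Function.Injective (τ i))
    (T m k : ℕ) (hT : ∀ i p, τ i p < T) :
    n * n ≤ (univ.filter fun i => k ≤ (crowded τ m i).card).card * n + n * k + T * m := by
  classical
  have h1 := card_not_crowded_le τ hτ T m hT
  have h2 := card_filter_add_card_filter_not (s := (univ : Finset (Fin n × Fin n)))
    (fun x => m ≤ (earlier τ x.1 x.2).card)
  rw [card_univ, Fintype.card_prod, Fintype.card_fin] at h2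
  have h3 : (univ.filter fun x : Fin n × Fin n => m ≤ (earlier τ x.1 x.2).card).card =
      ∑ i, (crowded τ m i).card := by
    simp only [crowded, card_filter]
    rw [Fintype.sum_prod_type]
  have h4 : ∑ i, (crowded τ m i).card ≤
      ∑ i : Fin n, ((if k ≤ (crowded τ m i).card then n else 0) + k) := by
    refine sum_le_sum fun i _ => ?_
    split_ifs with h
    · have := card_le_univ (crowded τ m i)
      rw [Fintype.card_fin] at this
      omega
    · omega
  rw [sum_add_distrib, ← sum_filter] at h4
  simp only [sum_const, smul_eq_mul, card_univ, Fintype.card_fin] at h4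
  omega

open Finset in
theorem card_feasiblePerms_le {n : ℕ} (τ : Fin n → Fin n → ℕ) (m k : ℕ) (ρ : ℝ)
    (h : ((n - m) ^ k * (n - k).factorial : ℕ) ≤ (n.factorial : ℝ) * ρ) :
    ((feasiblePerms τ).card : ℝ) ≤ (n.factorial : ℝ) ^ n *
      ρ ^ (univ.filter fun i => k ≤ (crowded τ m i).card).card := by
  classical
  have h1 := card_le_prod_of_extensions n (feasiblePerms τ)
    (fun i => if k ≤ (crowded τ m i).card then (n - m) ^ k * (n - k).factorial else n.factorial) ?_
  · have h2 : ((feasiblePerms τ).card : ℝ) ≤ ∏ i : Fin n,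
        ((n.factorial : ℝ) * if k ≤ (crowded τ m i).card then ρ else 1) := by
      refine le_trans (Nat.cast_le.2 h1) ?_
      push_cast
      refine prod_le_prod (fun i _ => by positivity) fun i _ => ?_
      split_ifs
      · exact_mod_cast h
      · simp
    refine h2.trans_eq ?_
    rw [prod_mul_distrib, ← prod_filter]
    simp
  · intro i f hf
    split_ifs with hk
    · exact extension_card_le τ m k i hk f hf
    · refine (card_le_univ _).trans ?_
      rw [Fintype.card_perm, Fintype.card_fin]

/-! ### Counting waiting times -/

open Finset in
/-- The number of `w : ι → ℕ` with total at most `W`, bounded through the generating function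
`∑ w, x ^ (∑ a, w a) ≤ (1 - x)⁻¹ ^ |ι|`. The range restriction on each `w a` only makes the set a
`Finset`. -/
theorem card_sum_le {ι : Type*} [Fintype ι] [DecidableEq ι] (W : ℕ) (x : ℝ) (hx : 0 < x)
    (hx1 : x < 1) :
    (((Fintype.piFinset fun _ : ι => range (W + 1)).filter fun w => ∑ a, w a ≤ W).card : ℝ) ≤
      (x ^ W)⁻¹ * ((1 - x)⁻¹) ^ Fintype.card ι := by
  rw [← div_eq_inv_mul, le_div_iff₀ (by positivity)]
  calc _ = ∑ w ∈ (Fintype.piFinset fun _ : ι => range (W + 1)).filter fun w => ∑ a, w a ≤ W,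
          x ^ W := by simp
    _ ≤ ∑ w ∈ (Fintype.piFinset fun _ : ι => range (W + 1)).filter fun w => ∑ a, w a ≤ W,
          ∏ a, x ^ w a := by
        refine sum_le_sum fun w hw => ?_
        rw [prod_pow_eq_pow_sum]
        exact pow_le_pow_of_le_one hx.le hx1.le (mem_filter.1 hw).2
    _ ≤ ∑ w ∈ Fintype.piFinset fun _ : ι => range (W + 1), ∏ a, x ^ w a :=
        sum_le_sum_of_subset_of_nonneg (filter_subset _ _) fun _ _ _ => by positivity
    _ = ∏ _a : ι, ∑ j ∈ range (W + 1), x ^ j := by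
        rw [prod_univ_sum]
    _ ≤ ∏ _a : ι, (1 - x)⁻¹ := by
        refine prod_le_prod (fun _ _ => by positivity) fun _ _ => ?_
        rw [← tsum_geometric_of_lt_one hx.le hx1]
        exact (summable_geometric_of_lt_one hx.le hx1).sum_le_tsum _ fun _ _ => by positivity
    _ = _ := by simp

open Finset in
/-- Distinct nonnegative integers have sum at least `0 + 1 + ⋯ + (n - 1)`. -/
theorem sum_injective_ge {n : ℕ} (a : Fin n → ℤ) (ha : Function.Injective a) (h0 : ∀ i, 0 ≤ a i) :
    (n : ℤ) * (n - 1) ≤ 2 * ∑ i, a i := by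
  have h := sum_range_le_sum (s := univ.image a) (c := 0) (by simpa using h0)
  rw [sum_image (fun _ _ _ _ h => ha h), card_image_of_injective _ ha] at h
  simp only [card_univ, Fintype.card_fin, zero_add] at h
  have h2 : ∀ m : ℕ, 2 * ∑ x ∈ range m, (x : ℤ) = m * (m - 1) := by
    intro m
    induction m with
    | zero => simp
    | succ m ih => rw [sum_range_succ, mul_add, ih]; push_cast; ring
  linarith [h2 n]

/-! ### Paths and schedules of the instance -/

theorem exists_crossing_time (L T : ℕ) (σ : ℕ → ℕ) (h0 : σ 0 = 0)
    (hs : ∀ t, σ (t + 1) = σ t ∨ σ (t + 1) = σ t + 1) (hT : σ T = L) (x : ℕ) (hx : x < L) :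
    ∃ t < T, σ t = x ∧ σ (t + 1) = x + 1 := by
  classical
  have hex : ∃ t, x < σ t := ⟨T, by omega⟩
  obtain ⟨t, ht⟩ : ∃ t, Nat.find hex = t + 1 := by
    refine Nat.exists_eq_succ_of_ne_zero fun h => ?_
    have := Nat.find_spec hex
    rw [h, h0] at this
    omega
  have h1 := Nat.find_spec hex
  have h2 : ¬ x < σ t := Nat.find_min hex (by omega)
  have h3 : t + 1 ≤ T := ht ▸ Nat.find_min' hex (by omega)
  rw [ht] at h1
  refine ⟨t, h3, ?_⟩
  rcases hs t with h | h <;> omega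

theorem flatten_pairs_getElem? {α : Type*} : ∀ (n : ℕ) (f g : Fin n → α) (p : Fin n),
    (List.ofFn fun i => [f i, g i]).flatten[2 * (p : ℕ)]? = some (f p) := by
  intro n
  induction n with
  | zero => intro f g p; exact p.elim0
  | succ n ih =>
    intro f g p
    rw [List.ofFn_succ, List.flatten_cons]
    refine Fin.cases ?_ (fun q => ?_) p
    · simp
    · have := ih (fun i => f i.succ) (fun i => g i.succ) q
      rw [Fin.val_succ, show 2 * ((q : ℕ) + 1) = 2 * q + 1 + 1 by ring]
      simpa using this

theorem pathOf_length {n : ℕ} (hn : 0 < n) (π : Equiv.Perm (Fin n)) :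
    (pathOf π).length = 2 * n + 3 := by
  simp [pathOf, hn, List.length_flatten, List.map_ofFn, Function.comp_def]
  omega

theorem pathOf_start {n : ℕ} (hn : 0 < n) (π : Equiv.Perm (Fin n)) :
    (pathOf π)[0]? = some Edg.start := by
  simp [pathOf, hn]

theorem pathOf_crit {n : ℕ} (π : Equiv.Perm (Fin n)) (p : Fin n) :
    (pathOf π)[2 * (p : ℕ) + 2]? = some (Edg.crit (π p)) := by
  have hn : 0 < n := p.pos
  have h := flatten_pairs_getElem? n (fun i => Edg.crit (π i))
    (fun i => Edg.back (π i) (nxt π i) (nxt_ne π i)) p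
  rw [pathOf, dif_pos hn, List.getElem?_cons_succ, List.getElem?_cons_succ, List.getElem?_append_left]
  · exact h
  · exact (List.getElem?_eq_some_iff.1 h).1

theorem pathOf_toT {n : ℕ} (hn : 0 < n) (π : Equiv.Perm (Fin n)) :
    (pathOf π)[2 * n + 2]? = some Edg.toT := by
  have hl : ((List.ofFn fun i : Fin n =>
      [Edg.crit (π i), Edg.back (π i) (nxt π i) (nxt_ne π i)]).flatten).length = 2 * n := by
    simp [List.length_flatten, List.map_ofFn, Function.comp_def, mul_comm]
  rw [pathOf, dif_pos hn, List.getElem?_cons_succ, List.getElem?_cons_succ,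
    List.getElem?_append_right hl.le, hl]
  simp

theorem congestion_eq {n : ℕ} (hn : 0 < n) (πs : Fin n → Equiv.Perm (Fin n)) :
    (lowerBoundInstance n πs).congestion = n := by
  refine le_antisymm (Finset.sup_le fun e _ => ?_) ?_
  · refine (Finite.card_subtype_le _).trans ?_
    exact (Nat.card_fin n).le
  · have h : Nat.card {i : Fin n | (Edg.start : Edg n) ∈ pathOf (πs i)} = n := by
      have : {i : Fin n | (Edg.start : Edg n) ∈ pathOf (πs i)} = Set.univ := by
        ext i
        simpa using List.mem_of_getElem? (pathOf_start hn (πs i))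
      rw [this]
      simp
    calc n = Nat.card {i : Fin n | (Edg.start : Edg n) ∈ pathOf (πs i)} := h.symm
      _ ≤ _ := Finset.le_sup (f := fun e : (lowerBoundInstance n πs).E =>
          Nat.card {i : Fin (lowerBoundInstance n πs).k | e ∈ (lowerBoundInstance n πs).path i})
          (Finset.mem_univ (Edg.start : Edg n))

theorem dilation_eq {n : ℕ} (hn : 0 < n) (πs : Fin n → Equiv.Perm (Fin n)) :
    (lowerBoundInstance n πs).dilation = 2 * n + 3 := by
  have h : ∀ i : Fin n, ((lowerBoundInstance n πs).path i).length = 2 * n + 3 :=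
    fun i => pathOf_length hn (πs i)
  refine le_antisymm (Finset.sup_le fun i _ => (h i).le) ?_
  rw [← h ⟨0, hn⟩]
  exact Finset.le_sup (f := fun i : Fin n => ((lowerBoundInstance n πs).path i).length)
    (Finset.mem_univ _)

/-- A feasible schedule of makespan at most `T` gives crossing times: packet `i` crosses the edge at
position `x` of its path in time step `θ i x + 1`. -/
theorem exists_crossing_times {n : ℕ} (hn : 0 < n) (πs : Fin n → Equiv.Perm (Fin n))
    (σ : Fin n → ℕ → ℕ) (hσ : (lowerBoundInstance n πs).IsSchedule σ)
    (hl : (lowerBoundInstance n πs).LoadLE σ 1) (T : ℕ)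
    (hT : (lowerBoundInstance n πs).CompletedBy σ T) :
    ∃ θ : Fin n → ℕ → ℕ,
      (∀ i x, x < 2 * n + 3 → θ i x < T) ∧
      (∀ i x y, x < y → y < 2 * n + 3 → θ i x < θ i y) ∧
      (∀ i j x y e, x < 2 * n + 3 → y < 2 * n + 3 → (pathOf (πs i))[x]? = some e →
        (pathOf (πs j))[y]? = some e → θ i x = θ j y → i = j) := by
  obtain ⟨h0, hs, -⟩ := hσ
  have hex : ∀ (i : Fin n) (x : ℕ), ∃ t, x < 2 * n + 3 →
      t < T ∧ σ i t = x ∧ σ i (t + 1) = x + 1 := by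
    intro i x
    by_cases hx : x < 2 * n + 3
    · obtain ⟨t, ht⟩ := exists_crossing_time (2 * n + 3) T (σ i) (h0 i) (hs i)
        ((hT i).trans (pathOf_length hn (πs i))) x hx
      exact ⟨t, fun _ => ht⟩
    · exact ⟨0, fun h => absurd h hx⟩
  choose θ hθ using hex
  refine ⟨θ, fun i x hx => (hθ i x hx).1, fun i x y hxy hy => ?_, ?_⟩
  · have hmono : Monotone (σ i) := monotone_nat_of_le_succ fun t => by
      rcases hs i t with h | h <;> omega
    obtain ⟨-, hx1, -⟩ := hθ i x (by omega)
    obtain ⟨-, hy1, -⟩ := hθ i y hy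
    by_contra hcon
    have := hmono (not_lt.1 hcon)
    omega
  · intro i j x y e hx hy hi hj hij
    obtain ⟨-, hx1, hx2⟩ := hθ i x hx
    obtain ⟨-, hy1, hy2⟩ := hθ j y hy
    have hc := hl e (θ i x)
    have hfin : Finite {i : Fin n | (lowerBoundInstance n πs).Crosses σ i e (θ i x)} := inferInstance
    have hsub := Finite.card_le_one_iff_subsingleton.1 hc
    have mi : (lowerBoundInstance n πs).Crosses σ i e (θ i x) :=
      ⟨by rw [hx1, hx2], by rw [hx1]; exact hi⟩
    have mj : (lowerBoundInstance n πs).Crosses σ j e (θ i x) :=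
      ⟨by rw [hij, hy1, hy2], by rw [hij, hy1]; exact hj⟩
    exact congrArg Subtype.val (hsub.elim ⟨i, mi⟩ ⟨j, mj⟩)

/-! ### Profiles of schedules -/

/-- The time at which packet `i` crosses its `p`-th critical edge, when it crosses the first one at
time `a i` and waits `w (i, q)` steps between its `q`-th critical edge and the following one. Each
such passage takes two steps besides the waiting. -/
def critTime {n : ℕ} (a : Fin n → ℕ) (w : Fin n × Fin n → ℕ) (i p : Fin n) : ℕ :=
  a i + ∑ q : Fin p, (w (i, q.castLE p.2.le) + 2)

/-- The pairs `(a, w)` of starting times and waiting times with total waiting at most `W` whose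
critical times are distinct for each packet and smaller than `T`. The bound on each single `w x`
follows from the one on the total; it is there to obtain a `Finset`. -/
noncomputable def profiles (n T W : ℕ) : Finset ((Fin n → ℕ) × (Fin n × Fin n → ℕ)) := by
  classical
  exact ((Fintype.piFinset fun _ => Finset.range T) ×ˢ
    ((Fintype.piFinset fun _ => Finset.range (W + 1)).filter fun w => ∑ x, w x ≤ W)).filter
      fun d => ∀ i, Function.Injective (critTime d.1 d.2 i) ∧ ∀ p, critTime d.1 d.2 i p < T

open Finset in
/-- In a schedule of makespan `T = 3n + 2 + s` the total waiting time between the critical edges is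
at most `n * s`: the packets cross the first edge at distinct times and the last edge at distinct
times, which already uses up `n (n - 1)` of the total slack `n (T - (2n + 3))`. -/
theorem exists_profile {n : ℕ} (hn : 0 < n) (πs : Fin n → Equiv.Perm (Fin n))
    (σ : Fin n → ℕ → ℕ) (hσ : (lowerBoundInstance n πs).IsSchedule σ)
    (hl : (lowerBoundInstance n πs).LoadLE σ 1) (T : ℕ)
    (hT : (lowerBoundInstance n πs).CompletedBy σ T) (s : ℕ) (hTs : T = 3 * n + 2 + s) :
    ∃ d ∈ profiles n T (n * s), πs ∈ feasiblePerms (critTime d.1 d.2) := by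
  classical
  obtain ⟨θ, hlt, hmono, hinj⟩ := exists_crossing_times hn πs σ hσ hl T hT
  set a : Fin n → ℕ := fun i => θ i 2 with ha
  set w : Fin n × Fin n → ℕ := fun x => θ x.1 (2 * x.2 + 4) - θ x.1 (2 * x.2 + 2) - 2 with hw
  have htel : ∀ i (p : ℕ), p ≤ n → a i + ∑ q ∈ range p,
      ((θ i (2 * q + 4) - θ i (2 * q + 2) - 2) + 2) = θ i (2 * p + 2) := by
    intro i p
    induction p with
    | zero => simp [ha]
    | succ p ih =>
      intro hp
      rw [sum_range_succ, ← add_assoc, ih (by omega)]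
      have h1 := hmono i (2 * p + 2) (2 * p + 3) (by omega) (by omega)
      have h2 := hmono i (2 * p + 3) (2 * p + 4) (by omega) (by omega)
      rw [show 2 * (p + 1) + 2 = 2 * p + 4 by ring]
      omega
  have hcrit : ∀ i p, critTime a w i p = θ i (2 * p + 2) := by
    intro i p
    rw [← htel i p p.2.le, critTime]
    congr 1
    exact Fin.sum_univ_eq_sum_range
      (fun q => (θ i (2 * q + 4) - θ i (2 * q + 2) - 2) + 2) p
  have hrow : ∀ i, ((∑ q, w (i, q) : ℕ) : ℤ) ≤ (θ i (2 * n + 2) : ℤ) - θ i 0 - 2 - 2 * n := by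
    intro i
    have h1 := htel i n le_rfl
    have h2 : ∑ q, w (i, q) = ∑ q ∈ range n, (θ i (2 * q + 4) - θ i (2 * q + 2) - 2) :=
      Fin.sum_univ_eq_sum_range (fun q => θ i (2 * q + 4) - θ i (2 * q + 2) - 2) n
    rw [sum_add_distrib, ← h2] at h1
    simp only [sum_const, card_range, smul_eq_mul, ha] at h1
    have h3 := hmono i 0 1 (by omega) (by omega)
    have h4 := hmono i 1 2 (by omega) (by omega)
    omega
  have htot : ∑ x, w x ≤ n * s := by
    have hA := sum_injective_ge (fun i => (θ i 0 : ℤ))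
      (fun i j h => hinj i j 0 0 _ (by omega) (by omega) (pathOf_start hn _) (pathOf_start hn _)
        (by simpa using h)) (fun i => by positivity)
    have hB := sum_injective_ge (fun i => (T : ℤ) - 1 - θ i (2 * n + 2))
      (fun i j h => hinj i j _ _ _ (by omega) (by omega) (pathOf_toT hn _) (pathOf_toT hn _)
        (by simpa using h)) (fun i => by have := hlt i (2 * n + 2) (by omega); omega)
    have hS : ((∑ x, w x : ℕ) : ℤ) ≤ ∑ i, ((θ i (2 * n + 2) : ℤ) - θ i 0 - 2 - 2 * n) := by
      rw [Fintype.sum_prod_type, Nat.cast_sum]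
      exact sum_le_sum fun i _ => hrow i
    simp only [sum_sub_distrib, sum_const, card_univ, Fintype.card_fin, nsmul_eq_mul] at hB hS
    have hT' : (T : ℤ) = 3 * n + 2 + s := by exact_mod_cast hTs
    rw [hT'] at hB
    zify
    push_cast at hS
    nlinarith
  refine ⟨(a, w), ?_, ?_⟩
  · simp only [profiles, mem_filter, mem_product, Fintype.mem_piFinset, mem_range]
    refine ⟨⟨fun i => hlt i 2 (by omega), fun x => ?_, htot⟩, fun i => ⟨?_, fun p => ?_⟩⟩
    · exact Nat.lt_succ_of_le ((single_le_sum (fun _ _ => Nat.zero_le _) (mem_univ x)).trans htot)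
    · refine StrictMono.injective fun p p' hp => ?_
      rw [hcrit, hcrit]
      have : (p : ℕ) < p' := hp
      exact hmono i _ _ (by omega) (by omega)
    · rw [hcrit]
      exact hlt i _ (by omega)
  · simp only [feasiblePerms, mem_filter, mem_univ, true_and, hcrit]
    intro i j p q h he
    exact hinj i j _ _ _ (by omega) (by omega) (pathOf_crit _ p)
      (by rw [he]; exact pathOf_crit _ q) h

open Finset in
theorem card_profiles_le (n T W : ℕ) (x : ℝ) (hx : 0 < x) (hx1 : x < 1) :
    ((profiles n T W).card : ℝ) ≤ (T : ℝ) ^ n * ((x ^ W)⁻¹ * ((1 - x)⁻¹) ^ (n * n)) := by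
  classical
  have h := card_sum_le (ι := Fin n × Fin n) W x hx hx1
  rw [Fintype.card_prod, Fintype.card_fin] at h
  refine (Nat.cast_le.2 (card_filter_le _ _)).trans ?_
  rw [card_product, Nat.cast_mul, Fintype.card_piFinset]
  simp only [card_range, prod_const, card_univ, Fintype.card_fin, Nat.cast_pow]
  gcongr

/-! ### The union bound -/

/-- A packet with `q ≈ n/10` positions that are crowded at level `2q ≈ n/5` has fewer choices than
`n!` by the factor `(9/10)^q`. -/
theorem row_gain {n q : ℕ} (h1 : 10 * q ≤ n) (h2 : n ≤ 10 * q + 9) (hq : 9 ≤ q) :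
    (((n - 2 * q) ^ q * (n - q).factorial : ℕ) : ℝ) ≤ (n.factorial : ℝ) * (9 / 10 : ℝ) ^ q := by
  have hf : (n - q).factorial * (n - q) ^ q ≤ n.factorial := by
    have := Nat.factorial_mul_pow_sub_le_factorial (Nat.sub_le n q)
    rwa [Nat.sub_sub_self (by omega)] at this
  have hb : ((n - 2 * q : ℕ) : ℝ) ≤ 9 / 10 * ((n - q : ℕ) : ℝ) := by
    have : 10 * (n - 2 * q) ≤ 9 * (n - q) := by omega
    have : (10 : ℝ) * ((n - 2 * q : ℕ) : ℝ) ≤ 9 * ((n - q : ℕ) : ℝ) := by exact_mod_cast this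
    linarith
  calc (((n - 2 * q) ^ q * (n - q).factorial : ℕ) : ℝ)
      = ((n - 2 * q : ℕ) : ℝ) ^ q * (n - q).factorial := by push_cast; ring
    _ ≤ (9 / 10 * ((n - q : ℕ) : ℝ)) ^ q * (n - q).factorial := by gcongr
    _ = (((n - q).factorial * (n - q) ^ q : ℕ) : ℝ) * (9 / 10) ^ q := by
        rw [mul_pow]; push_cast; ring
    _ ≤ _ := by gcongr

/-- The number of profiles times the saving for each profile is less than one. With `n ≈ 10 q` the
logarithms are about `0.025 q²` for the factor `4096 ^ (n s)`, `0.025 q²` for the factor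
`(4096/4095) ^ (n²)`, and at most `-0.2 q²` for the saving, while `T ^ n` contributes
`O(q log q)`. -/
theorem numeric_bound {n q s T : ℕ} (hq : 100000 ≤ q) (h1 : 10 * q ≤ n) (h2 : n ≤ 10 * q + 9)
    (hT : T = 3 * n + 2 + s) (hs : (s : ℝ) ≤ 1 + 3 / 100000 * (n + 1)) :
    (T : ℝ) ^ n * (((1 / 4096 : ℝ) ^ (n * s))⁻¹ * ((1 - 1 / 4096 : ℝ)⁻¹) ^ (n * n)) *
      ((9 / 10 : ℝ) ^ q) ^ (2 * q) < 1 := by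
  have hq' : (100000 : ℝ) ≤ q := by exact_mod_cast hq
  have h1' : 10 * (q : ℝ) ≤ n := by exact_mod_cast h1
  have h2' : (n : ℝ) ≤ 10 * q + 9 := by exact_mod_cast h2
  have hT' : (T : ℝ) = 3 * n + 2 + s := by exact_mod_cast hT
  have hTpos : (0 : ℝ) < T := by rw [hT']; positivity
  have hn11 : (n : ℝ) ≤ 11 * q := by linarith
  have hs2 : (s : ℝ) ≤ 2 + 33 / 100000 * q := by linarith
  have hT40 : (T : ℝ) ≤ 40 * q := by linarith
  rw [← Real.log_neg_iff (by positivity), Real.log_mul (by positivity) (by positivity),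
    Real.log_mul (by positivity) (by positivity), Real.log_mul (by positivity) (by positivity),
    Real.log_inv, Real.log_pow, Real.log_pow, Real.log_pow, Real.log_pow, Real.log_pow]
  have l1 : Real.log T ≤ 4 / 10000 * q + 45 := by
    have e1 : Real.log T = Real.log (T / 10 ^ 5) + 5 * Real.log 10 := by
      rw [Real.log_div hTpos.ne' (by positivity), Real.log_pow]
      push_cast
      ring
    have e2 := Real.log_le_sub_one_of_pos (show (0 : ℝ) < T / 10 ^ 5 by positivity)
    have e3 := Real.log_le_sub_one_of_pos (show (0 : ℝ) < 10 by norm_num)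
    rw [e1]
    have : (T : ℝ) / 10 ^ 5 ≤ 4 / 10000 * q := by
      rw [div_le_iff₀ (by positivity)]
      linarith
    linarith
  have l2 : -Real.log (1 / 4096) ≤ 9 := by
    rw [one_div, Real.log_inv, neg_neg, show (4096 : ℝ) = 2 ^ 12 by norm_num, Real.log_pow]
    have := Real.log_two_lt_d9
    push_cast
    linarith
  have l3 : Real.log (1 - 1 / 4096 : ℝ)⁻¹ ≤ 1 / 4095 := by
    have := Real.log_le_sub_one_of_pos (show (0 : ℝ) < (1 - 1 / 4096 : ℝ)⁻¹ by norm_num)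
    norm_num at this ⊢
    linarith
  have l4 : Real.log (9 / 10) ≤ -1 / 10 := by
    have := Real.log_le_sub_one_of_pos (show (0 : ℝ) < 9 / 10 by norm_num)
    linarith
  push_cast
  -- The crude bound `n ≤ 11 q` suffices for all terms.
  have b1 : (n : ℝ) * Real.log T ≤ 11 * q * (4 / 10000 * q + 45) := by gcongr
  have b2 : (n : ℝ) * s * (-Real.log (1 / 4096)) ≤ 11 * q * (2 + 33 / 100000 * q) * 9 := by
    gcongr
    rw [one_div, Real.log_inv, neg_neg]
    exact Real.log_nonneg (by norm_num)
  have b3 : (n : ℝ) * n * Real.log (1 - 1 / 4096 : ℝ)⁻¹ ≤ 11 * q * (11 * q) * (1 / 4095) := by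
    gcongr
  have b4 : 2 * (q : ℝ) * (q * Real.log (9 / 10)) ≤ 2 * (q : ℝ) * (q * (-1 / 10)) := by
    gcongr
  rw [Real.log_inv] at b3
  have b5 : 0 ≤ (q : ℝ) * (q - 100000) := mul_nonneg (by positivity) (by linarith)
  rw [Real.log_inv]
  nlinarith

open Finset in
/-- The union bound: some tuple of permutations is compatible with no profile. -/
theorem exists_perms_not_feasible {n s T : ℕ} (hn : 1000009 ≤ n) (hT : T = 3 * n + 2 + s)
    (hs : (s : ℝ) ≤ 1 + 3 / 100000 * (n + 1)) :
    ∃ πs : Fin n → Equiv.Perm (Fin n),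
      ∀ d ∈ profiles n T (n * s), πs ∉ feasiblePerms (critTime d.1 d.2) := by
  classical
  by_contra! hcon
  obtain ⟨q, h1, h2⟩ : ∃ q, 10 * q ≤ n ∧ n ≤ 10 * q + 9 := ⟨n / 10, by omega, by omega⟩
  have hq : 100000 ≤ q := by omega
  have hρ : ((9 / 10 : ℝ) ^ q) ≤ 1 := pow_le_one₀ (by norm_num) (by norm_num)
  have hn0 : (1000009 : ℝ) ≤ n := by exact_mod_cast hn
  have hbound : ∀ d ∈ profiles n T (n * s), ((feasiblePerms (critTime d.1 d.2)).card : ℝ) ≤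
      (n.factorial : ℝ) ^ n * ((9 / 10 : ℝ) ^ q) ^ (2 * q) := by
    intro d hd
    have hd' := (mem_filter.1 hd).2
    refine (card_feasiblePerms_le _ (2 * q) q _
      (row_gain h1 h2 (by omega))).trans ?_
    refine mul_le_mul_of_nonneg_left ?_ (by positivity)
    refine pow_le_pow_of_le_one (by positivity) hρ ?_
    have hrows := many_crowded_rows (critTime d.1 d.2) (fun i => (hd' i).1) T (2 * q) q
      (fun i => (hd' i).2)
    by_contra! hR
    have hR' := hR.le
    have hTs : 10 * T ≤ 31 * n := by
      have : (T : ℝ) = 3 * n + 2 + s := by exact_mod_cast hT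
      have : (10 : ℝ) * T ≤ 31 * n := by linarith
      exact_mod_cast this
    nlinarith
  have hcover : (univ : Finset (Fin n → Equiv.Perm (Fin n))) ⊆
      (profiles n T (n * s)).biUnion fun d => feasiblePerms (critTime d.1 d.2) := by
    intro πs _
    obtain ⟨d, hd, h⟩ := hcon πs
    exact mem_biUnion.2 ⟨d, hd, h⟩
  have hc : (n.factorial : ℝ) ^ n ≤ (profiles n T (n * s)).card *
      ((n.factorial : ℝ) ^ n * ((9 / 10 : ℝ) ^ q) ^ (2 * q)) := by
    calc (n.factorial : ℝ) ^ n
        = ((univ : Finset (Fin n → Equiv.Perm (Fin n))).card : ℝ) := by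
          simp [Fintype.card_perm]
      _ ≤ ∑ d ∈ profiles n T (n * s), ((feasiblePerms (critTime d.1 d.2)).card : ℝ) := by
          exact_mod_cast (card_le_card hcover).trans card_biUnion_le
      _ ≤ ∑ d ∈ profiles n T (n * s), (n.factorial : ℝ) ^ n * ((9 / 10 : ℝ) ^ q) ^ (2 * q) :=
          sum_le_sum hbound
      _ = _ := by simp
  have hp := card_profiles_le n T (n * s) (1 / 4096) (by norm_num) (by norm_num)
  have hnum := numeric_bound hq h1 h2 hT hs
  have hlt : (profiles n T (n * s)).card * ((9 / 10 : ℝ) ^ q) ^ (2 * q) < 1 :=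
    lt_of_le_of_lt (mul_le_mul_of_nonneg_right hp (by positivity)) hnum
  have hpos : (0 : ℝ) < (n.factorial : ℝ) ^ n := by positivity
  nlinarith

/-- There is `n₁` such that for every `n ≥ n₁` there are
permutations `π₁,…,π_n` of `{1,…,n}` such that every feasible schedule (load at
most `1`) for the instance `I(π₁,…,π_n)` — which has congestion `C = n` and
dilation `D = 2n+3` — has makespan strictly greater than `(1+10⁻⁵)·(C+D)`. -/
theorem exists_instance_beating_C_plus_D :
    ∃ n₁ : ℕ, ∀ n : ℕ, n₁ ≤ n →
      ∃ πs : Fin n → Equiv.Perm (Fin n),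
        (lowerBoundInstance n πs).congestion = n ∧
        (lowerBoundInstance n πs).dilation = 2 * n + 3 ∧
        ∀ σ : Fin (lowerBoundInstance n πs).k → ℕ → ℕ,
          (lowerBoundInstance n πs).IsSchedule σ →
          (lowerBoundInstance n πs).LoadLE σ 1 →
          ∀ T : ℕ, (lowerBoundInstance n πs).CompletedBy σ T →
            (1 + 1 / 100000 : ℝ) * ((n : ℝ) + (2 * (n : ℝ) + 3)) < (T : ℝ) := by
  refine ⟨1000009, fun n hn => ?_⟩
  have hn0 : 0 < n := by omega
  have hnR : (1000009 : ℝ) ≤ n := by exact_mod_cast hn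
  set X : ℝ := (1 + 1 / 100000 : ℝ) * ((n : ℝ) + (2 * (n : ℝ) + 3)) with hX
  have hfl : 3 * n + 2 ≤ ⌊X⌋₊ := by
    refine Nat.le_floor ?_
    push_cast
    rw [hX]
    linarith
  obtain ⟨s, hs⟩ := Nat.exists_eq_add_of_le hfl
  have hsR : (s : ℝ) ≤ 1 + 3 / 100000 * (n + 1) := by
    have h1 : (⌊X⌋₊ : ℝ) ≤ X := Nat.floor_le (by rw [hX]; positivity)
    rw [hs] at h1
    push_cast at h1
    rw [hX] at h1
    linarith
  obtain ⟨πs, hπs⟩ := exists_perms_not_feasible hn hs hsR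
  refine ⟨πs, congestion_eq hn0 πs, dilation_eq hn0 πs, fun σ hσ hl T hT => ?_⟩
  by_contra! hcon
  have hTX : T ≤ ⌊X⌋₊ := Nat.le_floor hcon
  -- A packet that has arrived by time `T` is still there at the later time `⌊X⌋₊`.
  have hT' : (lowerBoundInstance n πs).CompletedBy σ ⌊X⌋₊ := by
    intro i
    have hmono : Monotone (σ i) := monotone_nat_of_le_succ fun t => by
      rcases hσ.2.1 i t with h | h <;> omega
    exact le_antisymm (hσ.2.2 i _) ((hT i).symm.le.trans (hmono hTX))
  obtain ⟨d, hd, hfd⟩ := exists_profile hn0 πs σ hσ hl ⌊X⌋₊ hT' s hs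
  exact hπs d hd hfd
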